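/- arXiv:2501.10552 — 3 statements merged into one kernel-verified Lean document; each statement's English description precedes it below -/
import Mathlib

section
/- Let E_1, …, E_N be quantum channels on M_d(ℂ), and for each i set L_i := E_i − id. If the maps L_i pairwise commute (L_i ∘ L_j = L_j ∘ L_i for all i, j), then the Lindbladian L := Σ_{i=1}^N L_i is frustration-free: for every X ∈ M_d(ℂ), Σ_{i=1}^N L_i(X) = 0 implies L_i(X) = 0 for every i. -/
open Matrix Kronecker
open scoped ComplexOrder

/-- The Choi matrix of a linear map on `d × d` complex matrices. -/
noncomputable def ChoiMatrix {d : ℕ}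
    (E : Matrix (Fin d) (Fin d) ℂ →ₗ[ℂ] Matrix (Fin d) (Fin d) ℂ) :
    Matrix (Fin d × Fin d) (Fin d × Fin d) ℂ :=
  ∑ i : Fin d, ∑ j : Fin d,
    (E (Matrix.single i j 1)) ⊗ₖ (Matrix.single i j 1)

/-- A quantum channel: completely positive (positive semidefinite Choi matrix)
and trace-preserving. -/
def IsQuantumChannel {d : ℕ}
    (E : Matrix (Fin d) (Fin d) ℂ →ₗ[ℂ] Matrix (Fin d) (Fin d) ℂ) : Prop :=
  (ChoiMatrix E).PosSemidef ∧ ∀ X, (E X).trace = X.trace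

/-- Positive trace-preserving maps. -/
def PosTP {d : ℕ}
    (T : Matrix (Fin d) (Fin d) ℂ →ₗ[ℂ] Matrix (Fin d) (Fin d) ℂ) : Prop :=
  (∀ P, P.PosSemidef → (T P).PosSemidef) ∧ ∀ X, (T X).trace = X.trace

lemma choi_apply {d : ℕ}
    (E : Matrix (Fin d) (Fin d) ℂ →ₗ[ℂ] Matrix (Fin d) (Fin d) ℂ) (a i b j : Fin d) :
    ChoiMatrix E (a, i) (b, j) = E (Matrix.single i j 1) a b := by
  unfold ChoiMatrix
  simp only [Matrix.sum_apply, Matrix.kroneckerMap_apply]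
  rw [Finset.sum_eq_single i, Finset.sum_eq_single j]
  · simp
  · intro k _ hk
    simp [Matrix.single_apply, hk]
  · simp
  · intro k _ hk
    simp [Matrix.single_apply, hk]
  · simp

lemma apply_eq_choi {d : ℕ}
    (E : Matrix (Fin d) (Fin d) ℂ →ₗ[ℂ] Matrix (Fin d) (Fin d) ℂ)
    (P : Matrix (Fin d) (Fin d) ℂ) (a b : Fin d) :
    E P a b = ∑ i, ∑ j, P i j * ChoiMatrix E (a, i) (b, j) := by
  have h : P = ∑ i, ∑ j, P i j • Matrix.single i j (1 : ℂ) := by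
    conv_lhs => rw [Matrix.matrix_eq_sum_single P]
    simp [Matrix.smul_single]
  conv_lhs => rw [h]
  simp only [map_sum, map_smul, Matrix.sum_apply, Matrix.smul_apply, choi_apply, smul_eq_mul]

/-- Auxiliary compression matrix. -/
def auxW {d : ℕ} (Q : Matrix (Fin d) (Fin d) ℂ) (k : Fin d) :
    Matrix (Fin d × Fin d) (Fin d) ℂ :=
  fun p c => if p.1 = c then Q k p.2 else 0

lemma IsQuantumChannel.posTP {d : ℕ}
    {E : Matrix (Fin d) (Fin d) ℂ →ₗ[ℂ] Matrix (Fin d) (Fin d) ℂ}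
    (h : IsQuantumChannel E) : PosTP E := by
  refine ⟨fun P hP => ?_, h.2⟩
  obtain ⟨Q, rfl⟩ : ∃ Q : Matrix (Fin d) (Fin d) ℂ, P = Qᴴ * Q := by
    open scoped MatrixOrder in
    exact CStarAlgebra.nonneg_iff_eq_star_mul_self.mp hP.nonneg
  have key : E (Qᴴ * Q) = ∑ k, (auxW Q k)ᴴ * ChoiMatrix E * auxW Q k := by
    ext a b
    rw [apply_eq_choi]
    simp only [Matrix.sum_apply, Matrix.mul_apply, Fintype.sum_prod_type,
      Matrix.conjTranspose_apply, auxW, apply_ite (star : ℂ → ℂ), star_zero,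
      ite_mul, mul_ite, zero_mul, mul_zero, Finset.sum_mul]
    have e1 : ∀ k : Fin d, (∑ x : Fin d, ∑ j : Fin d, ∑ y : Fin d, ∑ i : Fin d,
        if x = b then (if y = a then star (Q k i) * ChoiMatrix E (y, i) (x, j) * Q k j else 0)
          else 0) = ∑ i : Fin d, ∑ j : Fin d,
            star (Q k i) * Q k j * ChoiMatrix E (a, i) (b, j) := by
      intro k
      rw [Finset.sum_eq_single b]
      · rw [Finset.sum_comm]
        rw [Finset.sum_eq_single a]
        · rw [Finset.sum_comm]
          refine Finset.sum_congr rfl fun i _ => Finset.sum_congr rfl fun j _ => ?_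
          simp; ring
        · intro y _ hy
          simp [hy]
        · simp
      · intro x _ hx
        simp [hx]
      · simp
    have e2 : ∀ k : Fin d, (∑ i : Fin d, ∑ j : Fin d,
            star (Q k i) * Q k j * ChoiMatrix E (a, i) (b, j)) = _ := fun k => (e1 k).symm
    trans ∑ k : Fin d, ∑ i : Fin d, ∑ j : Fin d,
            star (Q k i) * Q k j * ChoiMatrix E (a, i) (b, j)
    · rw [Finset.sum_comm]
      conv_rhs => rw [Finset.sum_comm]
      rw [Finset.sum_comm]
      refine Finset.sum_congr rfl fun i _ => ?_
      conv_rhs => rw [Finset.sum_comm]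
    · refine Finset.sum_congr rfl fun k _ => ?_
      rw [e2 k]
      refine Finset.sum_congr rfl fun x _ => Finset.sum_congr rfl fun j _ => ?_
      split_ifs with hx
      · refine Finset.sum_congr rfl fun y _ => ?_
        refine Finset.sum_congr rfl fun i _ => ?_
        split_ifs <;> simp
      · simp
  rw [key]
  exact Matrix.posSemidef_sum _ fun k _ => h.1.conjTranspose_mul_mul_same _

lemma psd_entry_bound {d : ℕ} {P : Matrix (Fin d) (Fin d) ℂ} (hP : P.PosSemidef)
    (a b : Fin d) : ‖P a b‖ ≤ P.trace.re := by
  obtain ⟨Q, rfl⟩ : ∃ Q : Matrix (Fin d) (Fin d) ℂ, P = Qᴴ * Q := by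
    open scoped MatrixOrder in
    exact CStarAlgebra.nonneg_iff_eq_star_mul_self.mp hP.nonneg
  have ht : (Qᴴ * Q).trace.re = ∑ c, ∑ k, ‖Q k c‖ ^ 2 := by
    simp only [Matrix.trace, Matrix.diag, Matrix.mul_apply, Matrix.conjTranspose_apply,
      Complex.re_sum]
    refine Finset.sum_congr rfl fun c _ => Finset.sum_congr rfl fun k _ => ?_
    rw [Complex.star_def, Complex.conj_mul']
    norm_cast
  have hc : ∀ c, ∑ k, ‖Q k c‖ ^ 2 ≤ ∑ c, ∑ k, ‖Q k c‖ ^ 2 := fun c =>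
    Finset.single_le_sum (f := fun c => ∑ k, ‖Q k c‖ ^ 2)
      (fun c _ => Finset.sum_nonneg fun k _ => by positivity) (Finset.mem_univ c)
  rw [ht, Matrix.mul_apply]
  have h1 : ‖∑ k, Qᴴ a k * Q k b‖ ≤ ∑ k, (‖Q k a‖ ^ 2 + ‖Q k b‖ ^ 2) / 2 := by
    refine (norm_sum_le _ _).trans (Finset.sum_le_sum fun k _ => ?_)
    rw [norm_mul, Matrix.conjTranspose_apply, norm_star]
    nlinarith [sq_nonneg (‖Q k a‖ - ‖Q k b‖)]
  rw [← Finset.sum_div, Finset.sum_add_distrib] at h1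
  linarith [hc a, hc b]

lemma polar {d : ℕ} (X : Matrix (Fin d) (Fin d) ℂ) :
    X = (1/4 : ℂ) • ((X + 1) * (X + 1)ᴴ - (X - 1) * (X - 1)ᴴ
      + Complex.I • ((X + Complex.I • 1) * (X + Complex.I • 1)ᴴ)
      - Complex.I • ((X - Complex.I • 1) * (X - Complex.I • 1)ᴴ)) := by
  simp only [Matrix.conjTranspose_add, Matrix.conjTranspose_sub, Matrix.conjTranspose_smul,
    Matrix.conjTranspose_one, Complex.star_def, Complex.conj_I, add_mul, mul_add, sub_mul,
    mul_sub, mul_one, one_mul, Matrix.smul_mul, Matrix.mul_smul, smul_add, smul_sub, smul_smul]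
  ext a b
  simp only [Matrix.add_apply, Matrix.sub_apply, Matrix.smul_apply, smul_eq_mul]
  ring_nf
  simp only [Complex.I_sq, Complex.I_pow_three, Complex.I_pow_four]
  ring

lemma PosTP.bound {d : ℕ} (X : Matrix (Fin d) (Fin d) ℂ) :
    ∃ C : ℝ, ∀ T, PosTP T → ∀ a b, ‖T X a b‖ ≤ C := by
  have hp : ∀ Y : Matrix (Fin d) (Fin d) ℂ, ∀ T, PosTP T → ∀ a b,
      ‖T (Y * Yᴴ) a b‖ ≤ (Y * Yᴴ).trace.re := by
    intro Y T hT a b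
    rw [← hT.2]
    exact psd_entry_bound (hT.1 _ (Matrix.posSemidef_self_mul_conjTranspose Y)) a b
  refine ⟨(1/4) * (((X + 1) * (X + 1)ᴴ).trace.re + ((X - 1) * (X - 1)ᴴ).trace.re
      + ((X + Complex.I • 1) * (X + Complex.I • 1)ᴴ).trace.re
      + ((X - Complex.I • 1) * (X - Complex.I • 1)ᴴ).trace.re), fun T hT a b => ?_⟩
  conv_lhs => rw [polar X]
  simp only [map_smul, map_add T, map_sub T, Matrix.add_apply, Matrix.sub_apply,
    Matrix.smul_apply, smul_eq_mul, norm_mul]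
  have hn : ‖(1/4 : ℂ)‖ = 1/4 := by norm_num
  rw [hn]
  have q1 := hp (X + 1) T hT a b
  have q2 := hp (X - 1) T hT a b
  have q3 := hp (X + Complex.I • 1) T hT a b
  have q4 := hp (X - Complex.I • 1) T hT a b
  refine mul_le_mul_of_nonneg_left ?_ (by norm_num)
  refine (norm_sub_le _ _).trans (add_le_add ((norm_add_le _ _).trans (add_le_add
    ((norm_sub_le _ _).trans (add_le_add q1 q2)) ?_)) ?_)
  · rw [norm_mul, Complex.norm_I, one_mul]; exact q3
  · rw [norm_mul, Complex.norm_I, one_mul]; exact q4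

lemma PosTP.pow {d : ℕ} {T : Matrix (Fin d) (Fin d) ℂ →ₗ[ℂ] Matrix (Fin d) (Fin d) ℂ}
    (hT : PosTP T) (n : ℕ) : PosTP (T ^ n) := by
  induction n with
  | zero => exact ⟨fun P hP => by simpa using hP, fun X => by simp⟩
  | succ n ih =>
    refine ⟨fun P hP => ?_, fun X => ?_⟩
    · rw [pow_succ', Module.End.mul_apply]; exact hT.1 _ (ih.1 _ hP)
    · rw [pow_succ', Module.End.mul_apply, hT.2, ih.2]

lemma PosTP.eig {d : ℕ} {T : Matrix (Fin d) (Fin d) ℂ →ₗ[ℂ] Matrix (Fin d) (Fin d) ℂ}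
    (hT : PosTP T) {X : Matrix (Fin d) (Fin d) ℂ} (hX : X ≠ 0) {μ : ℂ} (h : T X = μ • X) :
    ‖μ‖ ≤ 1 := by
  obtain ⟨C, hC⟩ := PosTP.bound X
  have hp : ∀ n : ℕ, (T ^ n) X = μ ^ n • X := by
    intro n
    induction n with
    | zero => simp
    | succ n ih => rw [pow_succ', Module.End.mul_apply, ih, map_smul, h, smul_smul, pow_succ]
  obtain ⟨a, b, hab⟩ : ∃ a b, X a b ≠ 0 := by
    by_contra! hcon
    exact hX (by ext a b; simpa using hcon a b)
  by_contra! hμ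
  have hpos : 0 < ‖X a b‖ := norm_pos_iff.mpr hab
  obtain ⟨n, hn⟩ := pow_unbounded_of_one_lt (C / ‖X a b‖) hμ
  have := hC _ (hT.pow n) a b
  rw [hp, Matrix.smul_apply, smul_eq_mul, norm_mul, norm_pow] at this
  rw [div_lt_iff₀ hpos] at hn
  linarith

lemma PosTP.jordan {d : ℕ} {T : Matrix (Fin d) (Fin d) ℂ →ₗ[ℂ] Matrix (Fin d) (Fin d) ℂ}
    (hT : PosTP T) {v w : Matrix (Fin d) (Fin d) ℂ} (h : T v = v + w) (hw : T w = w) :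
    w = 0 := by
  obtain ⟨C, hC⟩ := PosTP.bound v
  have hp : ∀ n : ℕ, (T ^ n) v = v + (n : ℂ) • w := by
    intro n
    induction n with
    | zero => simp
    | succ n ih =>
      rw [pow_succ', Module.End.mul_apply, ih, map_add, map_smul, h, hw]
      push_cast
      rw [add_smul, one_smul]; abel
  ext a b
  by_contra hab
  have hpos : 0 < ‖w a b‖ := norm_pos_iff.mpr hab
  obtain ⟨n, hn⟩ := exists_nat_gt ((C + ‖v a b‖) / ‖w a b‖)
  have h1 := hC _ (hT.pow n) a b
  rw [hp, Matrix.add_apply, Matrix.smul_apply, smul_eq_mul] at h1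
  rw [div_lt_iff₀ hpos] at hn
  have h2 : ‖(n : ℂ) * w a b‖ ≤ ‖v a b + n * w a b‖ + ‖v a b‖ := by
    have := norm_sub_le (v a b + n * w a b) (v a b)
    simpa using this
  rw [norm_mul, Complex.norm_natCast] at h2
  linarith

lemma eig_zero {N : ℝ} (hN : 0 < N) {l : ℂ} (h1 : ‖1 + l‖ ≤ 1)
    (h2 : ‖1 - (1 / N : ℝ) * l‖ ≤ 1) : l = 0 := by
  have g1 : (1 + l.re) ^ 2 + l.im ^ 2 ≤ 1 := by
    have := pow_le_one₀ (n := 2) (norm_nonneg _) h1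
    rw [Complex.sq_norm, Complex.normSq_apply] at this
    simp at this; nlinarith
  have g2 : (1 - 1 / N * l.re) ^ 2 + (1 / N * l.im) ^ 2 ≤ 1 := by
    have := pow_le_one₀ (n := 2) (norm_nonneg _) h2
    rw [Complex.sq_norm, Complex.normSq_apply] at this
    simp only [Complex.sub_re, Complex.sub_im, Complex.one_re, Complex.one_im,
      Complex.re_ofReal_mul, Complex.im_ofReal_mul] at this
    nlinarith
  have g3 : -2 * l.re * N + (l.re ^ 2 + l.im ^ 2) ≤ 0 := by
    have e : -2 * l.re * N + (l.re ^ 2 + l.im ^ 2)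
        = N ^ 2 * ((1 - 1 / N * l.re) ^ 2 + (1 / N * l.im) ^ 2 - 1) := by
      field_simp; ring
    rw [e]
    exact mul_nonpos_of_nonneg_of_nonpos (by positivity) (by linarith)
  have g4 : (2 * l.re + (l.re ^ 2 + l.im ^ 2)) * N ≤ 0 :=
    mul_nonpos_of_nonpos_of_nonneg (by nlinarith) hN.le
  have g5 : l.re ^ 2 + l.im ^ 2 ≤ 0 := by
    have := mul_nonneg (add_nonneg (sq_nonneg l.re) (sq_nonneg l.im)) hN.le
    nlinarith
  apply Complex.ext
  · simp; nlinarith [sq_nonneg l.re, sq_nonneg l.im]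
  · simp; nlinarith [sq_nonneg l.re, sq_nonneg l.im]

lemma nilp {V : Type*} [AddCommGroup V] [Module ℂ V] [FiniteDimensional ℂ V]
    (D : Module.End ℂ V) (h : ∀ μ : ℂ, D.HasEigenvalue μ → μ = 0)
    (h2 : ∀ v, D (D v) = 0 → D v = 0) (x : V) : D x = 0 := by
  have htop : D.maxGenEigenspace 0 = ⊤ := by
    rw [eq_top_iff, ← Module.End.iSup_maxGenEigenspace_eq_top D]
    refine iSup_le fun μ => ?_
    by_cases hμ : μ = 0
    · rw [hμ]
    · have : D.maxGenEigenspace μ = ⊥ := by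
        by_contra hne
        apply hμ
        apply h
        rw [Submodule.eq_bot_iff] at hne
        push Not at hne
        obtain ⟨y, hy, hy0⟩ := hne
        obtain ⟨k, hk⟩ := (Module.End.mem_maxGenEigenspace _ _ _).mp hy
        refine Module.End.hasEigenvalue_of_hasGenEigenvalue (k := k) ?_
        rw [Module.End.hasGenEigenvalue_iff]
        intro hb
        have hm : y ∈ D.genEigenspace μ k := by
          rw [Module.End.mem_genEigenspace_nat]; exact hk
        rw [hb] at hm
        exact hy0 hm
      rw [this]; exact bot_le
  have hx : x ∈ D.maxGenEigenspace 0 := htop ▸ Submodule.mem_top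
  obtain ⟨k, hk⟩ := (Module.End.mem_maxGenEigenspace _ _ _).mp hx
  rw [zero_smul, sub_zero] at hk
  have : ∀ k : ℕ, (D ^ (k + 1)) x = 0 → D x = 0 := by
    intro k
    induction k with
    | zero => simp
    | succ k ih =>
      intro hk
      rw [pow_succ', pow_succ', Module.End.mul_apply, Module.End.mul_apply] at hk
      apply ih
      rw [pow_succ', Module.End.mul_apply]
      exact h2 _ hk
  apply this k
  rw [pow_succ', Module.End.mul_apply, hk, map_zero]

/-- if the Lindbladians `L i = E i - id` associated to quantum channels
`E i` pairwise commute, then `∑ i, L i` is frustration-free. -/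
theorem commuting_lindbladian_frustrationFree {d N : ℕ}
    (E : Fin N → (Matrix (Fin d) (Fin d) ℂ →ₗ[ℂ] Matrix (Fin d) (Fin d) ℂ))
    (hE : ∀ i, IsQuantumChannel (E i))
    (L : Fin N → (Matrix (Fin d) (Fin d) ℂ →ₗ[ℂ] Matrix (Fin d) (Fin d) ℂ))
    (hL : ∀ i, L i = E i - LinearMap.id)
    (hcomm : ∀ i j, (L i) ∘ₗ (L j) = (L j) ∘ₗ (L i))
    (X : Matrix (Fin d) (Fin d) ℂ)
    (hX : ∑ i, L i X = 0) :
    ∀ i, L i X = 0 := by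
  intro i
  have hP : ∀ j, PosTP (E j) := fun j => (hE j).posTP
  have hNpos : 0 < (N : ℝ) := by exact_mod_cast i.pos
  have hNC : (N : ℂ) ≠ 0 := by exact_mod_cast hNpos.ne'
  set S : Matrix (Fin d) (Fin d) ℂ →ₗ[ℂ] Matrix (Fin d) (Fin d) ℂ := ∑ j, L j with hS
  -- the averaged map
  set T : Matrix (Fin d) (Fin d) ℂ →ₗ[ℂ] Matrix (Fin d) (Fin d) ℂ :=
    ((1 / N : ℝ) : ℂ) • (∑ j ∈ Finset.univ.erase i, E j + LinearMap.id) with hTdef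
  have hcard : ((Finset.univ.erase i).card : ℂ) + 1 = N := by
    have := Finset.card_erase_add_one (Finset.mem_univ i)
    rw [Finset.card_univ, Fintype.card_fin] at this
    exact_mod_cast this
  have hT : PosTP T := by
    refine ⟨fun P hPP => ?_, fun Y => ?_⟩
    · simp only [hTdef, LinearMap.smul_apply, LinearMap.add_apply, LinearMap.sum_apply,
        LinearMap.id_apply]
      refine Matrix.PosSemidef.smul (Matrix.PosSemidef.add ?_ hPP) ?_
      · exact Matrix.posSemidef_sum _ fun j _ => (hP j).1 _ hPP
      · rw [Complex.zero_le_real]; positivity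
    · simp only [hTdef, LinearMap.smul_apply, LinearMap.add_apply, LinearMap.sum_apply,
        LinearMap.id_apply, Matrix.trace_smul, Matrix.trace_add, Matrix.trace_sum, (hP _).2,
        Finset.sum_const, nsmul_eq_mul, smul_eq_mul]
      have : ((Finset.univ.erase i).card : ℂ) * Y.trace + Y.trace = N * Y.trace := by
        rw [← hcard]; ring
      rw [this]; push_cast; field_simp
  have hTL : ∀ Y, S Y = 0 → T Y = Y - ((1 / N : ℝ) : ℂ) • L i Y := by
    intro Y hY
    have h1 : ∑ j ∈ Finset.univ.erase i, E j Y
        = ∑ j ∈ Finset.univ.erase i, L j Y + ((Finset.univ.erase i).card : ℂ) • Y := by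
      have : ∀ j, E j Y = L j Y + Y := fun j => by rw [hL]; simp
      simp only [this, Finset.sum_add_distrib, Finset.sum_const, Nat.cast_smul_eq_nsmul]
    have h2 : L i Y + ∑ j ∈ Finset.univ.erase i, L j Y = 0 := by
      rw [Finset.add_sum_erase _ (fun j => L j Y) (Finset.mem_univ i), ← hY, hS, LinearMap.sum_apply]
    have h3 : ∑ j ∈ Finset.univ.erase i, L j Y = - L i Y := by
      rw [eq_neg_iff_add_eq_zero, add_comm]; exact h2
    simp only [hTdef, LinearMap.smul_apply, LinearMap.add_apply, LinearMap.sum_apply,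
        LinearMap.id_apply]
    rw [h1, h3]
    have h4 : -L i Y + ((Finset.univ.erase i).card : ℂ) • Y + Y = (N : ℂ) • Y - L i Y := by
      rw [← hcard, add_smul, one_smul]; abel
    rw [h4, smul_sub, smul_smul]
    have : ((1 / N : ℝ) : ℂ) * N = 1 := by push_cast; field_simp
    rw [this, one_smul]
  have hinv : ∀ v ∈ LinearMap.ker S, L i v ∈ LinearMap.ker S := by
    intro v hv
    rw [LinearMap.mem_ker] at *
    have : S (L i v) = L i (S v) := by
      simp only [hS, LinearMap.sum_apply, map_sum]
      exact Finset.sum_congr rfl fun j _ => LinearMap.congr_fun (hcomm j i) v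
    rw [this, hv, map_zero]
  have hEi : ∀ Y, E i Y = Y + L i Y := fun Y => by rw [hL]; simp
  have hXm : X ∈ LinearMap.ker S := by
    rw [LinearMap.mem_ker, hS, LinearMap.sum_apply]; exact hX
  have main := nilp ((L i).restrict hinv) ?_ ?_ ⟨X, hXm⟩
  · simpa using congrArg Subtype.val main
  · intro μ hμ
    obtain ⟨v, hv⟩ := hμ.exists_hasEigenvector
    have hv0 : (v : Matrix (Fin d) (Fin d) ℂ) ≠ 0 := fun h => hv.2 (Subtype.ext h)
    have hLv : L i v = μ • (v : Matrix (Fin d) (Fin d) ℂ) := by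
      simpa using congrArg Subtype.val hv.apply_eq_smul
    refine eig_zero hNpos ((hP i).eig hv0 ?_) (hT.eig hv0 ?_)
    · rw [hEi, hLv, add_smul, one_smul]
    · rw [hTL _ v.2, hLv, sub_smul, one_smul, smul_smul]
  · intro v hv
    have h0 : L i (L i v) = 0 := by simpa using congrArg Subtype.val hv
    have : L i v = 0 := (hP i).jordan (hEi v) (by rw [hEi, h0, add_zero])
    exact Subtype.ext (by simpa using this)
end

section
/- Let V be a finite-dimensional complex normed vector space and ‖·‖ the induced operator norm on linear endomorphisms of V. Let L_1, …, L_N be pairwise commuting linear endomorphisms of V, let P_1, …, P_N be linear endomorphisms of V, and let γ_1, …, γ_N > 0 be real numbers such that for all t ≥ 0 and all i: ‖exp(t L_i)‖ ≤ 1, ‖P_i‖ ≤ 1, and ‖exp(t L_i) − P_i‖ ≤ e^{−γ_i t}. Then for all t ≥ 0, ‖exp(t Σ_{i=1}^N L_i) − P_1 ∘ P_2 ∘ ⋯ ∘ P_N‖ ≤ N e^{−γ t}, where γ := min_i γ_i. In particular the evolution is rapid-mixing: the distance to the limiting projector decays exponentially with a rate γ independent of N and a prefactor linear in N. -/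
open scoped NNReal

/-- Telescoping bound for a product of exponentials of commuting endomorphisms. -/
theorem rapid_mixing_aux {V : Type*} [NormedAddCommGroup V] [NormedSpace ℂ V]
    [FiniteDimensional ℂ V] (c : ℝ) : ∀ (n : ℕ) (L P : Fin n → (V →L[ℂ] V)),
    (∀ i j, L i * L j = L j * L i) → (∀ i, ‖NormedSpace.exp (L i)‖ ≤ 1) →
    (∀ i, ‖P i‖ ≤ 1) → (∀ i, ‖NormedSpace.exp (L i) - P i‖ ≤ c) →
    ‖NormedSpace.exp (∑ i, L i)‖ ≤ 1 ∧
      ‖NormedSpace.exp (∑ i, L i) - (List.ofFn P).prod‖ ≤ n * c := by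
  have : CompleteSpace V := FiniteDimensional.complete ℂ V
  letI : NormedAlgebra ℚ (V →L[ℂ] V) := NormedAlgebra.restrictScalars ℚ ℂ _
  intro n
  induction n with
  | zero =>
    intro L P _ _ _ _
    have h1 : ‖(1 : V →L[ℂ] V)‖ ≤ 1 := ContinuousLinearMap.norm_id_le
    simpa [NormedSpace.exp_zero] using h1
  | succ n ih =>
    intro L P hcomm hc hP hd
    obtain ⟨h1, h2⟩ := ih (fun i => L i.succ) (fun i => P i.succ)
      (fun i j => hcomm _ _) (fun i => hc _) (fun i => hP _) (fun i => hd _)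
    have hcm : Commute (L 0) (∑ i : Fin n, L i.succ) :=
      Commute.sum_right _ _ _ (fun i _ => hcomm 0 i.succ)
    rw [Fin.sum_univ_succ, NormedSpace.exp_add_of_commute hcm, List.ofFn_succ, List.prod_cons]
    set E := NormedSpace.exp (∑ i : Fin n, L i.succ)
    set Q := (List.ofFn fun i : Fin n => P i.succ).prod
    have h0 := hc 0
    have hd0 := hd 0
    have hP0 := hP 0
    set X := NormedSpace.exp (L 0)
    have hc0 : 0 ≤ c := (norm_nonneg _).trans hd0
    constructor
    · exact (norm_mul_le _ _).trans (mul_le_one₀ h0 (norm_nonneg _) h1)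
    · have e : X * E - P 0 * Q = (X - P 0) * E + P 0 * (E - Q) := by noncomm_ring
      have a1 : ‖(X - P 0) * E‖ ≤ c * 1 :=
        (norm_mul_le _ _).trans (mul_le_mul hd0 h1 (norm_nonneg _) hc0)
      have a2 : ‖P 0 * (E - Q)‖ ≤ 1 * (n * c) :=
        (norm_mul_le _ _).trans (mul_le_mul hP0 h2 (norm_nonneg _) zero_le_one)
      rw [e]
      refine (norm_add_le _ _).trans ?_
      push_cast
      linarith

/-- for pairwise commuting generators `L i` whose one-parameter semigroups
are contractive and converge exponentially fast (with rate `γ i`) to maps `P i` of norm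
at most one, the semigroup generated by `∑ i, L i` converges to the composition
`P 0 ∘ P 1 ∘ ⋯ ∘ P (N-1)` exponentially fast with rate `γ = min_i γ i` and prefactor `N`:
rapid mixing. -/
theorem rapid_mixing_of_commuting {V : Type*} [NormedAddCommGroup V] [NormedSpace ℂ V]
    [FiniteDimensional ℂ V] {N : ℕ} [NeZero N]
    (L P : Fin N → (V →L[ℂ] V)) (γ : Fin N → ℝ)
    (hγ : ∀ i, 0 < γ i)
    (hcomm : ∀ i j, L i * L j = L j * L i)
    (hcontr : ∀ t : ℝ, 0 ≤ t → ∀ i, ‖NormedSpace.exp (t • L i)‖ ≤ 1)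
    (hP : ∀ i, ‖P i‖ ≤ 1)
    (hdist : ∀ t : ℝ, 0 ≤ t → ∀ i,
      ‖NormedSpace.exp (t • L i) - P i‖ ≤ Real.exp (-(γ i) * t)) :
    ∀ t : ℝ, 0 ≤ t →
      ‖NormedSpace.exp (t • ∑ i, L i) - (List.ofFn P).prod‖ ≤
        N * Real.exp (-(⨅ i, γ i) * t) := by
  intro t ht
  rw [Finset.smul_sum]
  refine (rapid_mixing_aux _ N (fun i => t • L i) P ?_ (hcontr t ht) hP ?_).2
  · intro i j
    simp only [smul_mul_smul_comm, hcomm i j]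
  · intro i
    refine (hdist t ht i).trans (Real.exp_le_exp.mpr ?_)
    have hle : ⨅ i, γ i ≤ γ i := ciInf_le (Set.finite_range γ).bddBelow i
    nlinarith
end

section
/- Let E be a quantum channel on M_d(ℂ) and L := E − id. Then the one-parameter semigroup exp(tL) converges as t → ∞: there exists a linear map P on M_d(ℂ) with exp(tL) → P as t → ∞. Moreover P ∘ P = P, P ∘ L = L ∘ P = 0, and the convergence is exponentially fast: there exist constants C ≥ 0 and γ > 0 such that ‖exp(tL) − P‖ ≤ C e^{−γ t} for all t ≥ 0 (in the operator norm on linear endomorphisms of M_d(ℂ) induced by the Frobenius norm). -/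
open Matrix Kronecker Filter
open scoped ComplexOrder Topology

attribute [local instance] Matrix.frobeniusNormedAddCommGroup Matrix.frobeniusNormedSpace
attribute [-instance] instTopologicalSpaceMatrix Matrix.instUniformSpace

theorem aux_decay {𝔸 : Type*} [NormedRing 𝔸] [NormedAlgebra ℂ 𝔸] [CompleteSpace 𝔸]
    (L P : 𝔸) (hPP : P * P = P) (hPL : P * L = 0) (hLP : L * P = 0)
    (N : ℕ) (hN : 0 < N) (hr : ‖(NormedSpace.exp L * (1 - P)) ^ N‖ < 1) :
    ∃ C : ℝ, 0 ≤ C ∧ ∃ γ : ℝ, 0 < γ ∧ ∀ t : ℝ, 0 ≤ t →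
        ‖NormedSpace.exp (t • L) - P‖ ≤ C * Real.exp (-γ * t) := by
  let _ : NormedAlgebra ℚ 𝔸 := NormedAlgebra.restrictScalars ℚ ℂ 𝔸
  have hexpP : ∀ t : ℝ, NormedSpace.exp (t • L) * P = P := by
    intro t
    have h := NormedSpace.exp_series_hasSum_exp' (𝕂 := ℂ) (t • L)
    have h2 := h.mul_right P
    have h3 : HasSum (fun n : ℕ => (((n.factorial : ℂ)⁻¹) • (t • L) ^ n) * P) P := by
      have := hasSum_single (f := fun n : ℕ => (((n.factorial : ℂ)⁻¹) • (t • L) ^ n) * P) 0 ?_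
      · simpa using this
      · intro n hn
        obtain ⟨m, rfl⟩ := Nat.exists_eq_succ_of_ne_zero hn
        simp [pow_succ, mul_assoc, hLP]
    exact h2.unique h3
  have hcomm : Commute L P := by rw [Commute, SemiconjBy, hPL, hLP]
  have hcomm' : Commute L (1 - P) := (Commute.one_right L).sub_right hcomm
  set g : ℝ → 𝔸 := fun t => NormedSpace.exp (t • L) * (1 - P) with hg
  have hgP : ∀ t, NormedSpace.exp (t • L) - P = g t := by
    intro t; simp [hg, mul_sub, hexpP]
  have hQQ : (1 - P) * (1 - P) = 1 - P := by
    simp [mul_sub, sub_mul, hPP]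
  have hgadd : ∀ s t, g (s + t) = g s * g t := by
    intro s t
    simp only [hg]
    have h1 : NormedSpace.exp ((s + t) • L)
        = NormedSpace.exp (s • L) * NormedSpace.exp (t • L) := by
      rw [add_smul, NormedSpace.exp_add_of_commute]
      exact ((Commute.refl L).smul_left s).smul_right t
    have h2 : Commute (NormedSpace.exp (t • L)) (1 - P) :=
      (hcomm'.smul_left t).exp_left
    rw [h1, mul_assoc, mul_assoc, ← mul_assoc (1 - P), ← h2.eq, mul_assoc _ (1 - P), hQQ]
  have hgcont : Continuous g := by
    simp only [hg]
    exact (NormedSpace.exp_continuous.comp (continuous_id.smul continuous_const)).mul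
      continuous_const
  set R := NormedSpace.exp L * (1 - P) with hR
  have hg1 : g 1 = R := by simp [hg, hR]
  have hgn : ∀ n : ℕ, ∀ s, g (s + n) = g s * R ^ n := by
    intro n
    induction n with
    | zero => intro s; simp
    | succ k ih =>
      intro s
      rw [Nat.cast_succ, ← add_assoc, hgadd, ih, hg1, pow_succ, mul_assoc]
  obtain ⟨M, hM⟩ := isCompact_Icc.exists_bound_of_continuousOn (s := Set.Icc (0:ℝ) N)
    hgcont.continuousOn
  have hM0 : 0 ≤ M := (norm_nonneg _).trans (hM 0 ⟨le_rfl, by positivity⟩)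
  set q := max ‖R ^ N‖ (1/2) with hq
  have hq0 : 0 < q := lt_of_lt_of_le (by norm_num) (le_max_right _ _)
  have hq1 : q < 1 := max_lt hr (by norm_num)
  have hlog : Real.log q < 0 := Real.log_neg hq0 hq1
  have hNR : (0:ℝ) < N := by exact_mod_cast hN
  refine ⟨M * Real.exp (-Real.log q), by positivity, -Real.log q / N,
    div_pos (by linarith) hNR, ?_⟩
  intro t ht
  rw [hgP]
  set k := ⌊t / N⌋₊ with hk
  have hk1 : (k:ℝ) ≤ t / N := Nat.floor_le (by positivity)
  have hk2 : t / N < k + 1 := Nat.lt_floor_add_one _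
  have hk1' : (k:ℝ) * N ≤ t := (le_div_iff₀ hNR).1 hk1
  have hk2' : t < (k + 1) * N := (div_lt_iff₀ hNR).1 hk2
  have hsplit : ∀ j : ℕ, ∀ s ∈ Set.Icc (0:ℝ) N, ‖g (s + (N * j : ℕ))‖ ≤ M * q ^ j := by
    intro j s hs
    rw [hgn, pow_mul]
    induction j with
    | zero => simpa using hM s hs
    | succ j ih =>
      rw [pow_succ, ← mul_assoc]
      calc _ ≤ ‖g s * (R ^ N) ^ j‖ * ‖R ^ N‖ := norm_mul_le _ _
        _ ≤ (M * q ^ j) * q := by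
          gcongr
          exact le_max_left _ _
        _ = _ := by ring
  have h := hsplit k (t - N * k) ⟨by linarith, by linarith⟩
  have e : t - N * k + ((N * k : ℕ) : ℝ) = t := by push_cast; ring
  rw [e] at h
  refine h.trans ?_
  rw [mul_assoc, ← Real.exp_add]
  gcongr
  rw [← Real.exp_log (pow_pos hq0 k), Real.log_pow]
  gcongr
  have : -(-Real.log q / N) * t = Real.log q * (t / N) := by ring
  rw [this]
  nlinarith

theorem aux_pow {V : Type*} [NormedAddCommGroup V] [NormedSpace ℂ V] [FiniteDimensional ℂ V]
    (E P : V →L[ℂ] V) (K : ℝ) (hK : ∀ n : ℕ, ‖E ^ n‖ ≤ K)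
    (hPL : P * (E - 1) = 0) (hLP : (E - 1) * P = 0) (hker : ∀ x, (E - 1) x = 0 → P x = x) :
    ∃ N : ℕ, 0 < N ∧ ‖(NormedSpace.exp (E - 1) * (1 - P)) ^ N‖ < 1 := by
  have : CompleteSpace V := FiniteDimensional.complete ℂ V
  let _ : NormedAlgebra ℚ (V →L[ℂ] V) := NormedAlgebra.restrictScalars ℚ ℂ _
  set L := E - 1 with hL
  set R := NormedSpace.exp L * (1 - P) with hR
  have hexp : ∀ (μ : ℂ) (x : V), L x = μ • x → NormedSpace.exp L x = Complex.exp μ • x := by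
    intro μ x hx
    have hpow : ∀ n : ℕ, (L ^ n) x = μ ^ n • x := by
      intro n
      induction n with
      | zero => simp
      | succ k ih => rw [pow_succ', mul_apply_eq_comp, ih, map_smul, hx, smul_smul,
          pow_succ]
    have h := NormedSpace.exp_series_hasSum_exp' (𝕂 := ℂ) L
    have h2 := (ContinuousLinearMap.apply ℂ V x).hasSum h
    have h3 := (NormedSpace.exp_series_hasSum_exp' (𝕂 := ℂ) μ).smul_const x
    rw [← Complex.exp_eq_exp_ℂ] at h3
    refine HasSum.unique h2 (h3.congr_fun ?_)
    intro n
    simp [hpow, smul_smul]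
  have hcommLP : Commute L P := by rw [Commute, SemiconjBy, hPL, hLP]
  have hcomm : Commute R L := by
    refine Commute.mul_left (Commute.refl L).exp_left ?_
    exact ((Commute.one_left L).sub_left hcommLP.symm)
  have heig : ∀ lam ∈ spectrum ℂ R, ‖lam‖₊ < 1 := by
    intro lam hlam
    rw [ContinuousLinearMap.spectrum_eq] at hlam
    have hev := Module.End.HasEigenvalue.of_mem_spectrum hlam
    have hcomm2 : Commute (R : Module.End ℂ V) (L : Module.End ℂ V) := by
      have h := hcomm.eq
      refine LinearMap.ext fun x => ?_
      exact DFunLike.congr_fun h x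
    set W := Module.End.eigenspace (R : Module.End ℂ V) lam with hW
    have hmaps : ∀ x ∈ W, (L : Module.End ℂ V) x ∈ W := fun x hx =>
      Module.End.mapsTo_genEigenspace_of_comm hcomm2 lam 1 hx
    have hWne : Nontrivial W := Submodule.nontrivial_iff_ne_bot.2 hev
    obtain ⟨μ, hμ⟩ := Module.End.exists_eigenvalue ((L : Module.End ℂ V).restrict hmaps)
    obtain ⟨w, hw⟩ := hμ.exists_hasEigenvector
    have hx0 : (w : V) ≠ 0 := fun h => hw.2 (Subtype.ext h)
    have hLx : L (w : V) = μ • (w : V) := congrArg Subtype.val hw.apply_eq_smul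
    have hRx : R (w : V) = lam • (w : V) := Module.End.mem_eigenspace_iff.1 w.2
    generalize (w : V) = x at hx0 hLx hRx
    have hRx' : R x = NormedSpace.exp L (x - P x) := by simp [hR]
    by_cases hμ0 : μ = 0
    · have h1 : P x = x := hker x (by rw [hLx, hμ0, zero_smul])
      rw [hRx', h1, sub_self, map_zero] at hRx
      have : lam = 0 := (smul_eq_zero.1 hRx.symm).resolve_right hx0
      simp [this]
    · have h1 : P x = 0 := by
        have h := DFunLike.congr_fun hPL x
        rw [mul_apply_eq_comp, hLx, map_smul] at h
        exact (smul_eq_zero.1 h).resolve_left hμ0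
      rw [hRx', h1, sub_zero, hexp μ x hLx] at hRx
      have hlam : Complex.exp μ = lam := smul_left_injective ℂ hx0 hRx
      have hEx : E x = (1 + μ) • x := by
        have : E x = L x + x := by simp [hL]
        rw [this, hLx, add_smul, one_smul, add_comm]
      have hEn : ∀ n : ℕ, (E ^ n) x = (1 + μ) ^ n • x := by
        intro n
        induction n with
        | zero => simp
        | succ k ih => rw [pow_succ', mul_apply_eq_comp, ih, map_smul, hEx, smul_smul, pow_succ]
      have hbd : ∀ n : ℕ, ‖1 + μ‖ ^ n ≤ K := by
        intro n
        have h := ((E ^ n).le_opNorm x).trans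
          (mul_le_mul_of_nonneg_right (hK n) (norm_nonneg x))
        rw [hEn, norm_smul, norm_pow] at h
        exact le_of_mul_le_mul_right h (norm_pos_iff.2 hx0)
      have hle : ‖1 + μ‖ ≤ 1 := by
        by_contra hcon
        obtain ⟨n, hn⟩ := pow_unbounded_of_one_lt K (not_le.1 hcon)
        exact absurd (hbd n) (not_le.2 hn)
      have hre : μ.re < 0 := by
        have h2 : ‖1 + μ‖ ^ 2 ≤ 1 := pow_le_one₀ (norm_nonneg _) hle
        rw [← Complex.normSq_eq_norm_sq, Complex.normSq_apply] at h2
        simp only [Complex.add_re, Complex.one_re, Complex.add_im, Complex.one_im] at h2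
        by_contra hcon
        push Not at hcon
        have hr0 : μ.re = 0 := by nlinarith [mul_self_nonneg μ.im, mul_self_nonneg μ.re]
        have hi0 : μ.im = 0 := by
          have : μ.im * μ.im ≤ 0 := by nlinarith
          nlinarith [mul_self_eq_zero.1 (le_antisymm this (mul_self_nonneg _))]
        exact hμ0 (Complex.ext hr0 hi0)
      have : ‖lam‖ < 1 := by
        rw [← hlam, Complex.norm_exp]
        exact (by simpa using hre : Real.exp μ.re < 1)
      exact_mod_cast this
  have hsr : spectralRadius ℂ R < 1 := by
    by_cases hne : (spectrum ℂ R).Nonempty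
    · exact_mod_cast spectrum.spectralRadius_lt_of_forall_lt_of_nonempty hne heig
    · rw [Set.not_nonempty_iff_eq_empty] at hne
      simp [spectralRadius, hne]
  have hG := spectrum.pow_nnnorm_pow_one_div_tendsto_nhds_spectralRadius R
  have hev := (hG.eventually (gt_mem_nhds hsr)).and (eventually_gt_atTop 0)
  obtain ⟨N, hN, hN0⟩ := hev.exists
  refine ⟨N, hN0, ?_⟩
  by_contra hcon
  push Not at hcon
  refine absurd hN (not_lt.2 ?_)
  refine ENNReal.one_le_rpow ?_ (by positivity)
  exact_mod_cast hcon


theorem aux_main {V : Type*} [NormedAddCommGroup V] [NormedSpace ℂ V] [FiniteDimensional ℂ V]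
    (E : V →L[ℂ] V) (K : ℝ) (hK : ∀ n : ℕ, ‖E ^ n‖ ≤ K) (L : V →L[ℂ] V) (hL : L = E - 1) :
    ∃ P : V →L[ℂ] V,
      Tendsto (fun t : ℝ => NormedSpace.exp (t • L)) atTop (𝓝 P) ∧
      P ∘L P = P ∧ P ∘L L = 0 ∧ L ∘L P = 0 ∧
      ∃ C : ℝ, 0 ≤ C ∧ ∃ γ : ℝ, 0 < γ ∧ ∀ t : ℝ, 0 ≤ t →
        ‖NormedSpace.exp (t • L) - P‖ ≤ C * Real.exp (-γ * t) := by
  have : CompleteSpace V := FiniteDimensional.complete ℂ V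
  set l : V →ₗ[ℂ] V := (L : V →ₗ[ℂ] V) with hl
  have hdisj : Disjoint (LinearMap.ker l) (LinearMap.range l) := by
    rw [Submodule.disjoint_def]
    rintro x hx ⟨y, rfl⟩
    have hLL : L (L y) = 0 := hx
    change L y = 0
    have hE1 : ∀ z, E z = L z + z := by intro z; simp [hL]
    have hEn : ∀ n : ℕ, (E ^ n) y = y + (n : ℂ) • L y := by
      intro n
      induction n with
      | zero => simp
      | succ k ih =>
        rw [pow_succ', mul_apply_eq_comp, ih, map_add, map_smul, hE1 y, hE1 (L y), hLL]
        push_cast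
        module
    by_contra hne
    have hpos : 0 < ‖L y‖ := norm_pos_iff.2 hne
    obtain ⟨n, hn⟩ := exists_nat_gt ((K * ‖y‖ + ‖y‖) / ‖L y‖)
    rw [div_lt_iff₀ hpos] at hn
    have h1 : ‖(n : ℂ) • L y‖ ≤ K * ‖y‖ + ‖y‖ := by
      have : (n : ℂ) • L y = (E ^ n) y - y := by rw [hEn]; abel
      rw [this]
      refine (norm_sub_le _ _).trans ?_
      gcongr
      exact ((E ^ n).le_opNorm y).trans (mul_le_mul_of_nonneg_right (hK n) (norm_nonneg y))
    rw [norm_smul, Complex.norm_natCast] at h1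
    linarith
  have hcompl : IsCompl (LinearMap.ker l) (LinearMap.range l) := by
    refine ⟨hdisj, codisjoint_iff.2 (Submodule.eq_top_of_disjoint _ _ ?_ hdisj)⟩
    rw [add_comm, LinearMap.finrank_range_add_finrank_ker]
  set p := (LinearMap.ker l).projection (LinearMap.range l) hcompl with hp
  set P : V →L[ℂ] V := LinearMap.toContinuousLinearMap p with hP
  have hPapp : ∀ x, P x = p x := fun x => rfl
  have hPL : P * L = 0 := by
    ext x
    exact (Submodule.projection_apply_eq_zero_iff hcompl).2 ⟨x, rfl⟩
  have hLP : L * P = 0 := by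
    ext x
    exact Submodule.projection_apply_mem hcompl x
  have hker : ∀ x, L x = 0 → P x = x := fun x hx =>
    Submodule.projection_apply_of_mem_left hcompl hx
  have hPP : P * P = P := by
    ext x
    exact hker _ (DFunLike.congr_fun hLP x)
  obtain ⟨N, hN, hr⟩ := aux_pow E P K hK (hL ▸ hPL) (hL ▸ hLP) (hL ▸ hker)
  rw [← hL] at hr
  obtain ⟨C, hC, γ, hγ, hb⟩ := aux_decay L P hPP hPL hLP N hN hr
  refine ⟨P, ?_, hPP, hPL, hLP, C, hC, γ, hγ, hb⟩
  rw [tendsto_iff_norm_sub_tendsto_zero]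
  refine squeeze_zero' (Eventually.of_forall fun t => norm_nonneg _)
    ((eventually_ge_atTop 0).mono hb) ?_
  have h1 : Tendsto (fun t : ℝ => -γ * t) atTop atBot :=
    tendsto_id.const_mul_atTop_of_neg (by linarith)
  simpa using (Real.tendsto_exp_atBot.comp h1).const_mul C

theorem aux_pos {d : ℕ} (E : Matrix (Fin d) (Fin d) ℂ →ₗ[ℂ] Matrix (Fin d) (Fin d) ℂ)
    (hE : (ChoiMatrix E).PosSemidef) (w : Fin d → ℂ) :
    (E (Matrix.vecMulVec w (star w))).PosSemidef := by
  set B : Matrix (Fin d × Fin d) (Fin d) ℂ :=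
    Matrix.of fun a r => if a.1 = r then star (w a.2) else 0 with hB
  have hChoi : ∀ a b, ChoiMatrix E a b = E (Matrix.single a.2 b.2 1) a.1 b.1 := by
    intro a b
    simp [ChoiMatrix, Matrix.sum_apply, Matrix.kroneckerMap_apply, Matrix.single_apply,
      ite_and, Finset.sum_ite_eq]
  have key : E (Matrix.vecMulVec w (star w)) = Bᴴ * ChoiMatrix E * B := by
    have h : Matrix.vecMulVec w (star w)
        = ∑ i, ∑ j, (w i * star (w j)) • Matrix.single i j (1 : ℂ) := by
      conv_lhs => rw [Matrix.matrix_eq_sum_single (Matrix.vecMulVec w (star w))]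
      simp [Matrix.vecMulVec_apply, Matrix.smul_single]
    rw [h]
    ext r r'
    simp only [map_sum, map_smul, Matrix.sum_apply, Matrix.smul_apply, smul_eq_mul,
      Matrix.mul_apply, Matrix.conjTranspose_apply, hChoi, hB, Matrix.of_apply,
      Fintype.sum_prod_type, Finset.sum_mul, apply_ite star, star_star, star_zero, mul_ite, mul_zero,
      ite_mul, zero_mul]
    simp [Finset.sum_ite_irrel, Finset.sum_ite_eq, Finset.sum_ite_eq']
    rw [Finset.sum_comm]
    refine Finset.sum_congr rfl fun i _ => Finset.sum_congr rfl fun j _ => by ring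
  rw [key]
  exact hE.conjTranspose_mul_mul_same B

theorem aux_pos' {d : ℕ} (E : Matrix (Fin d) (Fin d) ℂ →ₗ[ℂ] Matrix (Fin d) (Fin d) ℂ)
    (hE : (ChoiMatrix E).PosSemidef) (X : Matrix (Fin d) (Fin d) ℂ) (hX : X.PosSemidef) :
    (E X).PosSemidef := by
  obtain ⟨m, v, rfl⟩ := Matrix.posSemidef_iff_eq_sum_vecMulVec.1 hX
  rw [map_sum]
  exact Matrix.posSemidef_sum _ fun i _ => aux_pos E hE (v i)

theorem aux_norm {d : ℕ} (X : Matrix (Fin d) (Fin d) ℂ) (hX : X.PosSemidef) :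
    ‖X‖ ≤ ‖X.trace‖ := by
  obtain ⟨m, v, rfl⟩ := Matrix.posSemidef_iff_eq_sum_vecMulVec.1 hX
  have h1 : ∀ w : Fin d → ℂ, ‖Matrix.vecMulVec w (star w)‖ ≤ ∑ i, ‖w i‖ ^ 2 := by
    intro w
    have : Matrix.vecMulVec w (star w)
        = Matrix.replicateCol Unit w * (Matrix.replicateCol Unit w)ᴴ := by
      ext i j; simp [Matrix.vecMulVec_apply, Matrix.mul_apply]
    rw [this]
    refine (Matrix.frobenius_norm_mul _ _).trans ?_
    rw [Matrix.frobenius_norm_conjTranspose, Matrix.frobenius_norm_replicateCol, ← sq,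
      EuclideanSpace.norm_sq_eq]
  have h2 : (∑ k, Matrix.vecMulVec (v k) (star (v k))).trace
      = ((∑ k, ∑ i, ‖v k i‖ ^ 2 : ℝ) : ℂ) := by
    rw [Matrix.trace_sum]
    push_cast
    refine Finset.sum_congr rfl fun k _ => ?_
    simp [Matrix.trace, Matrix.vecMulVec_apply, Complex.mul_conj, Complex.normSq_eq_norm_sq]
  rw [h2, Complex.norm_real, Real.norm_of_nonneg (by positivity)]
  exact (norm_sum_le _ _).trans (Finset.sum_le_sum fun k _ => h1 _)

theorem aux_orbit {d : ℕ} (E : Matrix (Fin d) (Fin d) ℂ →ₗ[ℂ] Matrix (Fin d) (Fin d) ℂ)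
    (hE : IsQuantumChannel E) (X : Matrix (Fin d) (Fin d) ℂ) :
    ∃ C : ℝ, ∀ n : ℕ, ‖(E ^ n) X‖ ≤ C := by
  let S : Submodule ℂ (Matrix (Fin d) (Fin d) ℂ) :=
    { carrier := {X | ∃ C : ℝ, ∀ n : ℕ, ‖(E ^ n) X‖ ≤ C}
      zero_mem' := ⟨0, fun n => by simp⟩
      add_mem' := by
        rintro a b ⟨C, hC⟩ ⟨D, hD⟩
        refine ⟨C + D, fun n => ?_⟩
        rw [map_add]
        exact (norm_add_le _ _).trans (add_le_add (hC n) (hD n))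
      smul_mem' := by
        rintro c a ⟨C, hC⟩
        refine ⟨‖c‖ * C, fun n => ?_⟩
        rw [map_smul, norm_smul]
        exact mul_le_mul_of_nonneg_left (hC n) (norm_nonneg _) }
  have hpos : ∀ w : Fin d → ℂ, Matrix.vecMulVec w (star w) ∈ S := by
    intro w
    refine ⟨‖(Matrix.vecMulVec w (star w)).trace‖, fun n => ?_⟩
    have : ((E ^ n) (Matrix.vecMulVec w (star w))).PosSemidef ∧
        ((E ^ n) (Matrix.vecMulVec w (star w))).trace = (Matrix.vecMulVec w (star w)).trace := by
      induction n with
      | zero => exact ⟨Matrix.posSemidef_vecMulVec_self_star w, rfl⟩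
      | succ k ih =>
        rw [pow_succ', Module.End.mul_apply]
        exact ⟨aux_pos' E hE.1 _ ih.1, (hE.2 _).trans ih.2⟩
    rw [← this.2]
    exact aux_norm _ this.1
  have hpol : ∀ x y : Fin d → ℂ, Matrix.vecMulVec x (star y) ∈ S := by
    intro x y
    have h : Matrix.vecMulVec x (star y) = (1/4 : ℂ) •
        (Matrix.vecMulVec (x + y) (star (x + y)) - Matrix.vecMulVec (x - y) (star (x - y))
        + Complex.I • Matrix.vecMulVec (x + Complex.I • y) (star (x + Complex.I • y))
        - Complex.I • Matrix.vecMulVec (x - Complex.I • y) (star (x - Complex.I • y))) := by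
      ext i j
      simp only [Matrix.vecMulVec_apply, Matrix.smul_apply, Matrix.add_apply, Matrix.sub_apply,
        Pi.star_apply, Pi.add_apply, Pi.sub_apply, Pi.smul_apply, smul_eq_mul, star_add, star_sub,
        star_mul', Complex.star_def, Complex.conj_I]
      ring_nf
      simp only [Complex.I_sq]
      ring
    rw [h]
    exact S.smul_mem _ (S.sub_mem (S.add_mem (S.sub_mem (hpos _) (hpos _))
      (S.smul_mem _ (hpos _))) (S.smul_mem _ (hpos _)))
  have hall : X ∈ S := by
    rw [Matrix.matrix_eq_sum_single X]
    refine S.sum_mem fun i _ => S.sum_mem fun j _ => ?_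
    have : Matrix.single i j (X i j)
        = X i j • Matrix.vecMulVec (Pi.single i 1) (star (Pi.single j 1 : Fin d → ℂ)) := by
      ext a b
      simp [Matrix.single_apply, Matrix.vecMulVec_apply, Pi.single_apply, ite_and, eq_comm]
      try split_ifs <;> simp
    rw [this]
    exact S.smul_mem _ (hpol _ _)
  exact hall

/-- for a quantum channel `E` and `L = E - id`, the semigroup `exp (t L)`
converges as `t → ∞` to an idempotent `P` with `P ∘ L = L ∘ P = 0`, and the convergence
is exponentially fast in the operator norm induced by the Frobenius norm. -/
theorem semigroup_converges_to_projector {d : ℕ}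
    (E : Matrix (Fin d) (Fin d) ℂ →ₗ[ℂ] Matrix (Fin d) (Fin d) ℂ)
    (hE : IsQuantumChannel E)
    (L : Matrix (Fin d) (Fin d) ℂ →L[ℂ] Matrix (Fin d) (Fin d) ℂ)
    (hL : L = LinearMap.toContinuousLinearMap (E - LinearMap.id)) :
    ∃ P : Matrix (Fin d) (Fin d) ℂ →L[ℂ] Matrix (Fin d) (Fin d) ℂ,
      Tendsto (fun t : ℝ => NormedSpace.exp (t • L)) atTop (𝓝 P) ∧
      P ∘L P = P ∧ P ∘L L = 0 ∧ L ∘L P = 0 ∧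
      ∃ C : ℝ, 0 ≤ C ∧ ∃ γ : ℝ, 0 < γ ∧ ∀ t : ℝ, 0 ≤ t →
        ‖NormedSpace.exp (t • L) - P‖ ≤ C * Real.exp (-γ * t) := by
  have hb : ∀ X, ∃ C : ℝ, ∀ n : ℕ, ‖((LinearMap.toContinuousLinearMap E) ^ n) X‖ ≤ C := by
    intro X
    obtain ⟨C, hC⟩ := aux_orbit E hE X
    refine ⟨C, fun n => ?_⟩
    have h : ((LinearMap.toContinuousLinearMap E) ^ n) X = (E ^ n) X := by
      induction n with
      | zero => rfl
      | succ k ih =>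
        rw [pow_succ', pow_succ', mul_apply_eq_comp, ih]
        rfl
    rw [h]
    exact hC n
  have : CompleteSpace (Matrix (Fin d) (Fin d) ℂ) := FiniteDimensional.complete ℂ _
  obtain ⟨K, hK⟩ := banach_steinhaus hb
  refine aux_main (LinearMap.toContinuousLinearMap E) K hK L ?_
  rw [hL]
  rfl
end
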